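/- Each of the permutations 215463, 236145 and 214653 is an annihilator: every permutation π that contains an interval copy of 215463, or an interval copy of 236145, or an interval copy of 214653, satisfies μ(1,π) = 0. -/

import Mathlib

/-!
The permutation pattern poset and its Möbius function.

A permutation of length `n` is represented as an element of the symmetric
group on `Fin n`; the collection of all permutations of all lengths is the
sigma type `PPerm`.  Pattern containment `PPerm.Le` makes `PPerm` into the
permutation pattern poset, and `mu` is its Möbius function, defined by the
usual recursion `μ(σ,σ) = 1`, `μ(σ,π) = -∑_{σ ≤ λ < π} μ(σ,λ)` for `σ < π`
and `μ(σ,π) = 0` otherwise.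
-/

open scoped Classical

/-- A permutation of an arbitrary finite length `n`, as an element of the
symmetric group on `Fin n`. -/
abbrev PPerm : Type := Σ n : ℕ, Equiv.Perm (Fin n)

namespace PPerm

/-- Classical pattern containment `σ ≤ π`: there is a strictly increasing map
of positions along which `π` realises the same relative order as `σ`. -/
def Le (σ π : PPerm) : Prop :=
  ∃ f : Fin σ.1 → Fin π.1, StrictMono f ∧
    ∀ a b : Fin σ.1, σ.2 a < σ.2 b ↔ π.2 (f a) < π.2 (f b)

/-- Strict pattern containment. -/
def Lt (σ π : PPerm) : Prop := Le σ π ∧ σ ≠ π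

/-- The permutation `1` of length one. -/
def one : PPerm := ⟨1, 1⟩

/-- The direct sum `α ⊕ β` of two permutations: `β` is placed after and
above `α`. -/
def dsum (α β : PPerm) : PPerm :=
  ⟨α.1 + β.1, finSumFinEquiv.symm.trans ((Equiv.sumCongr α.2 β.2).trans finSumFinEquiv)⟩

end PPerm

/-- Fuelled recursion computing the Möbius function of the permutation
pattern poset.  Any `λ` with `σ ≤ λ < π` has length `< |π|`, so for any
fuel `≥ |π| + 1` this computes the standard recursion
`μ(σ,σ) = 1`, `μ(σ,π) = -∑_{σ ≤ λ < π} μ(σ,λ)` for `σ < π`, and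
`μ(σ,π) = 0` when `σ ≰ π`. -/
noncomputable def muAux : ℕ → PPerm → PPerm → ℤ
  | 0, _, _ => 0
  | n + 1, σ, π =>
    if σ = π then 1
    else if PPerm.Le σ π then
      - ∑ m ∈ Finset.range π.1,
          ∑ p ∈ Finset.univ.filter
              (fun p : Equiv.Perm (Fin m) => PPerm.Le σ ⟨m, p⟩ ∧ PPerm.Le ⟨m, p⟩ π),
            muAux n σ ⟨m, p⟩
    else 0

/-- The Möbius function of the permutation pattern poset. -/
noncomputable def mu (σ π : PPerm) : ℤ := muAux (π.1 + 1) σ π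

/-- The closed interval `[σ, π]` of the permutation pattern poset, as a
finset (any `λ ≤ π` has length `≤ |π|`). -/
noncomputable def intervalCC (σ π : PPerm) : Finset PPerm :=
  (Finset.range (π.1 + 1)).biUnion fun m =>
    (Finset.univ.filter fun p : Equiv.Perm (Fin m) =>
        PPerm.Le σ ⟨m, p⟩ ∧ PPerm.Le ⟨m, p⟩ π).image fun p => (⟨m, p⟩ : PPerm)

/-- The half-open interval `[σ, π)` of the permutation pattern poset. -/
noncomputable def intervalCO (σ π : PPerm) : Finset PPerm :=
  (intervalCC σ π).filter fun lam => lam ≠ π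

/-- `π` contains an interval copy of `α`: there is a set of `|α|` contiguous
positions of `π` (starting at position `i`), whose values form a contiguous
range (starting at value `v`), and whose entries are order-isomorphic
to `α`. -/
def HasIntervalCopy (π α : PPerm) : Prop :=
  ∃ (f : Fin α.1 → Fin π.1) (i v : ℕ),
    (∀ a : Fin α.1, (f a : ℕ) = i + (a : ℕ)) ∧
    (∀ a : Fin α.1, v ≤ (π.2 (f a) : ℕ) ∧ (π.2 (f a) : ℕ) < v + α.1) ∧
    (∀ a b : Fin α.1, α.2 a < α.2 b ↔ π.2 (f a) < π.2 (f b))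

/-- The permutation `215463` (0-indexed values `1 0 4 3 5 2`). -/
noncomputable def p215463 : PPerm :=
  ⟨6, Equiv.ofBijective (![1, 0, 4, 3, 5, 2] : Fin 6 → Fin 6) (by decide)⟩

/-- The permutation `236145` (0-indexed values `1 2 5 0 3 4`). -/
noncomputable def p236145 : PPerm :=
  ⟨6, Equiv.ofBijective (![1, 2, 5, 0, 3, 4] : Fin 6 → Fin 6) (by decide)⟩

/-- The permutation `214653` (0-indexed values `1 0 3 5 4 2`). -/
noncomputable def p214653 : PPerm :=
  ⟨6, Equiv.ofBijective (![1, 0, 3, 5, 4, 2] : Fin 6 → Fin 6) (by decide)⟩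


theorem not_one_le_zero (p : Equiv.Perm (Fin 0)) : ¬ PPerm.Le PPerm.one ⟨0, p⟩ := by
  rintro ⟨f, -, -⟩
  exact (f (0 : Fin 1)).elim0

theorem one_le_of_pos (π : PPerm) (h : 1 ≤ π.1) : PPerm.Le PPerm.one π := by
  refine ⟨fun _ => ⟨0, h⟩, ?_, ?_⟩
  · intro a b hab
    have h1 := a.2
    have h2 := b.2
    have : (a : ℕ) < b := hab
    simp only [PPerm.one] at h1 h2
    omega
  · intro a b
    have : a = b := Subsingleton.elim (α := Fin 1) a b
    subst this
    simp

theorem le_length {σ π : PPerm} (h : PPerm.Le σ π) : σ.1 ≤ π.1 := by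
  obtain ⟨f, hf, -⟩ := h
  simpa using Fintype.card_le_of_injective f hf.injective

theorem le_refl' (π : PPerm) : PPerm.Le π π := ⟨id, strictMono_id, fun _ _ => Iff.rfl⟩

theorem eq_of_le_same {n : ℕ} (p q : Equiv.Perm (Fin n)) (h : PPerm.Le ⟨n, p⟩ ⟨n, q⟩) :
    p = q := by
  obtain ⟨f, hf, h⟩ := h
  have hid : f = id := by
    have h1 : StrictMono (f : Fin n → Fin n) := hf
    have hs : Function.Surjective (f : Fin n → Fin n) := Finite.surjective_of_injective h1.injective
    have := (StrictMono.range_inj h1 strictMono_id).1 (by rw [hs.range_eq]; simp)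
    exact this
  subst hid
  have h2 : StrictMono (p.symm.trans q) := by
    intro a b hab
    have := (h (p.symm a) (p.symm b)).1 (by simpa using hab)
    simpa using this
  have h3 : ⇑(p.symm.trans q) = id := by
    refine (StrictMono.range_inj h2 strictMono_id).1 ?_
    rw [(Equiv.surjective _).range_eq]; simp
  ext a
  have := congrFun h3 (p a)
  simp at this
  rw [this]

theorem muAux_stable : ∀ (N : ℕ) (σ π : PPerm) (k : ℕ), π.1 ≤ N → π.1 + 1 ≤ k →
    muAux k σ π = mu σ π := by
  intro N
  induction N with
  | zero =>
    intro σ π k hN hk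
    obtain ⟨k, rfl⟩ : ∃ j, k = j + 1 := ⟨k - 1, by omega⟩
    have : π.1 = 0 := by omega
    simp [mu, muAux, this]
  | succ N ih =>
    intro σ π k hN hk
    obtain ⟨k, rfl⟩ : ∃ j, k = j + 1 := ⟨k - 1, by omega⟩
    simp only [mu, muAux]
    congr 2
    congr 1
    refine Finset.sum_congr rfl fun m hm => Finset.sum_congr rfl fun p _ => ?_
    have hm' := Finset.mem_range.1 hm
    rw [ih σ ⟨m, p⟩ k (by simp; omega) (by simp; omega),
      ih σ ⟨m, p⟩ π.1 (by simp; omega) (by simp; omega)]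

theorem mu_rec (π : PPerm) (h : 2 ≤ π.1) :
    mu PPerm.one π = - ∑ m ∈ Finset.range π.1, ∑ p : Equiv.Perm (Fin m),
      if PPerm.Le ⟨m, p⟩ π then mu PPerm.one ⟨m, p⟩ else 0 := by
  have h1 : PPerm.one ≠ π := by
    rintro rfl; simp [PPerm.one] at h
  rw [mu, muAux, if_neg h1, if_pos (one_le_of_pos π (by omega))]
  congr 1
  refine Finset.sum_congr rfl fun m hm => ?_
  rw [Finset.sum_filter]
  refine Finset.sum_congr rfl fun p _ => ?_
  have hm' := Finset.mem_range.1 hm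
  rw [muAux_stable _ _ ⟨m, p⟩ π.1 le_rfl (by simp; omega)]
  by_cases hl : PPerm.Le ⟨m, p⟩ π
  · by_cases ho : PPerm.Le PPerm.one ⟨m, p⟩
    · simp [hl, ho]
    · have : mu PPerm.one ⟨m, p⟩ = 0 := by
        have hne : PPerm.one ≠ ⟨m, p⟩ := by
          intro he; apply ho; rw [← he]; exact le_refl' _
        rw [mu, muAux, if_neg hne, if_neg ho]
      simp [this]
  · simp [hl]

theorem mu_sum (π : PPerm) (n : ℕ) (h : 2 ≤ π.1) (hn : π.1 ≤ n) :
    ∑ m ∈ Finset.range (n + 1), ∑ p : Equiv.Perm (Fin m),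
      (if PPerm.Le ⟨m, p⟩ π then mu PPerm.one ⟨m, p⟩ else 0) = 0 := by
  have hsub : Finset.range (π.1 + 1) ⊆ Finset.range (n + 1) :=
    Finset.range_subset_range.2 (by omega)
  rw [← Finset.sum_subset hsub]
  · rw [Finset.sum_range_succ]
    have : ∑ p : Equiv.Perm (Fin π.1),
        (if PPerm.Le ⟨π.1, p⟩ π then mu PPerm.one ⟨π.1, p⟩ else 0) = mu PPerm.one π := by
      rw [Finset.sum_eq_single π.2]
      · have := le_refl' π
        exact if_pos this
      · intro p _ hp
        rw [if_neg]
        intro hl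
        exact hp (eq_of_le_same p π.2 hl)
      · simp
    rw [this, mu_rec π h]
    simp
  · intro m _ hm
    refine Finset.sum_eq_zero fun p _ => ?_
    rw [if_neg]
    intro hl
    have := le_length hl
    simp at hm this
    omega

/-- The word of a permutation. -/
noncomputable def wd (π : PPerm) : List ℕ := List.ofFn (fun i => (π.2 i : ℕ))

theorem wd_length (π : PPerm) : (wd π).length = π.1 := by simp [wd]

theorem wd_nodup (π : PPerm) : (wd π).Nodup := by
  rw [wd, List.nodup_ofFn]
  intro a b h
  exact π.2.injective (Fin.ext h)

/-- `g` is strictly increasing on the entries of `x`. -/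
def MonoOn (g : ℕ → ℕ) (x : List ℕ) : Prop := ∀ a ∈ x, ∀ b ∈ x, a < b → g a < g b

/-- Order isomorphism of words. -/
def OI (x y : List ℕ) : Prop := ∃ g : ℕ → ℕ, MonoOn g x ∧ y = x.map g

/-- Pattern containment of words. -/
def PL (u w : List ℕ) : Prop := ∃ s : List ℕ, s.Sublist w ∧ OI s u

theorem MonoOn.lt_iff {g : ℕ → ℕ} {x : List ℕ} (h : MonoOn g x) {a b : ℕ} (ha : a ∈ x)
    (hb : b ∈ x) : g a < g b ↔ a < b := by
  constructor
  · intro hlt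
    rcases lt_trichotomy a b with h1 | h1 | h1
    · exact h1
    · subst h1; omega
    · have := h b hb a ha h1; omega
  · exact h a ha b hb

theorem MonoOn.mono {g : ℕ → ℕ} {x y : List ℕ} (h : MonoOn g x) (hs : ∀ a ∈ y, a ∈ x) :
    MonoOn g y := fun a ha b hb hab => h a (hs a ha) b (hs b hb) hab

theorem OI.refl (x : List ℕ) : OI x x := ⟨id, fun _ _ _ _ h => h, by simp⟩

theorem OI.length {x y : List ℕ} (h : OI x y) : y.length = x.length := by
  obtain ⟨g, -, rfl⟩ := h; simp

theorem OI.symm {x y : List ℕ} (h : OI x y) : OI y x := by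
  obtain ⟨g, hg, rfl⟩ := h
  have hinj : Set.InjOn g {a | a ∈ x} := by
    intro a ha b hb hab
    rcases lt_trichotomy a b with h1 | h1 | h1
    · have := hg a ha b hb h1; omega
    · exact h1
    · have := hg b hb a ha h1; omega
  have hl := hinj.leftInvOn_invFunOn
  refine ⟨Function.invFunOn g {a | a ∈ x}, ?_, ?_⟩
  · intro a ha b hb hab
    obtain ⟨a, ha', rfl⟩ := List.mem_map.1 ha
    obtain ⟨b, hb', rfl⟩ := List.mem_map.1 hb
    rw [hl ha', hl hb']
    exact (hg.lt_iff ha' hb').1 hab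
  · rw [List.map_map]
    symm
    rw [List.map_congr_left (g := id)]
    · simp
    · intro a ha
      exact hl ha

theorem OI.trans {x y z : List ℕ} (h : OI x y) (h' : OI y z) : OI x z := by
  obtain ⟨g, hg, rfl⟩ := h
  obtain ⟨k, hk, rfl⟩ := h'
  refine ⟨k ∘ g, ?_, by simp⟩
  intro a ha b hb hab
  exact hk _ (List.mem_map_of_mem ha) _ (List.mem_map_of_mem hb) (hg a ha b hb hab)

theorem PL.trans {u v w : List ℕ} (h : PL u v) (h' : PL v w) : PL u w := by
  obtain ⟨s, hs, ho⟩ := h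
  obtain ⟨t, ht, g, hg, rfl⟩ := h'
  obtain ⟨s', hs', rfl⟩ := List.sublist_map_iff.1 hs
  exact ⟨s', hs'.trans ht, OI.trans ⟨g, hg.mono fun a ha => hs'.subset ha, rfl⟩ ho⟩

theorem PL.of_sublist {u w : List ℕ} (h : u.Sublist w) : PL u w := ⟨u, h, OI.refl u⟩

theorem PL.of_OI {u w : List ℕ} (h : OI w u) : PL u w := ⟨w, List.Sublist.refl w, h⟩

theorem PL.length {u w : List ℕ} (h : PL u w) : u.length ≤ w.length := by
  obtain ⟨s, hs, ho⟩ := h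
  rw [ho.length]; exact hs.length_le

theorem PL.empty (w : List ℕ) : PL [] w := PL.of_sublist (List.nil_sublist w)

theorem le_iff_PL (σ π : PPerm) : PPerm.Le σ π ↔ PL (wd σ) (wd π) := by
  constructor
  · rintro ⟨f, hf, h⟩
    refine ⟨List.ofFn (fun i => (π.2 (f i) : ℕ)), ?_, OI.symm ?_⟩
    · rw [List.sublist_iff_exists_fin_orderEmbedding_get_eq]
      refine ⟨⟨⟨fun i => Fin.cast (by simp [wd]) (f (Fin.cast (by simp) i)), ?_⟩, ?_⟩, ?_⟩
      · intro a b hab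
        have := hf.injective (Fin.cast_injective _ hab)
        exact Fin.cast_injective _ this
      · intro a b
        have := hf.le_iff_le (a := Fin.cast (by simp) a) (b := Fin.cast (by simp) b)
        exact this
      · intro i
        simp only [wd, List.get_ofFn]
        rfl
    · refine ⟨fun v => if hv : v < σ.1 then (π.2 (f (σ.2.symm ⟨v, hv⟩)) : ℕ) else 0, ?_, ?_⟩
      · intro a ha b hb hab
        simp only [wd, List.mem_ofFn] at ha hb
        obtain ⟨i, rfl⟩ := ha
        obtain ⟨j, rfl⟩ := hb
        simp only [Fin.is_lt, dif_pos, Fin.eta, Equiv.symm_apply_apply]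
        exact (h i j).1 hab
      · simp only [wd, List.map_ofFn]
        congr 1
        funext i
        simp
  · rintro ⟨s, hs, ho⟩
    obtain ⟨e, he⟩ := List.sublist_iff_exists_fin_orderEmbedding_get_eq.1 hs
    obtain ⟨g, hg, hm⟩ := ho
    have hl : s.length = σ.1 := by
      have := congrArg List.length hm
      simpa [wd_length] using this.symm
    have hl' := wd_length π
    refine ⟨fun i => Fin.cast hl' (e (Fin.cast hl.symm i)), ?_, ?_⟩
    · intro a b hab
      have : e (Fin.cast hl.symm a) < e (Fin.cast hl.symm b) := e.lt_iff_lt.2 hab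
      exact this
    · have key : ∀ i : Fin σ.1, (σ.2 i : ℕ) = g (s.get (Fin.cast hl.symm i)) := by
        intro i
        have h1 : (wd σ)[(i : ℕ)]'(by rw [wd_length]; exact i.2) = σ.2 i := by simp [wd]
        rw [← h1]
        simp [hm]
      have key2 : ∀ i : Fin σ.1, (π.2 (Fin.cast hl' (e (Fin.cast hl.symm i))) : ℕ) =
          s.get (Fin.cast hl.symm i) := by
        intro i
        rw [he]
        simp only [wd, List.get_ofFn]
      intro a b
      rw [Fin.lt_def, Fin.lt_def, key, key, key2, key2]
      exact hg.lt_iff (List.get_mem _ _) (List.get_mem _ _)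

theorem exists_perm (s : List ℕ) (hs : s.Nodup) : ∃ ρ : PPerm, OI s (wd ρ) := by
  let S := s.toFinset
  have hc : S.card = s.length := List.toFinset_card_of_nodup hs
  let e := S.orderIsoOfFin hc
  let f : Fin s.length → Fin s.length := fun i =>
    e.symm ⟨s.get i, by simp [S]⟩
  have hf : Function.Injective f := by
    intro a b hab
    have := e.symm.injective hab
    exact (List.nodup_iff_injective_get.1 hs) (by simpa using this)
  refine ⟨⟨s.length, Equiv.ofBijective f (Finite.injective_iff_bijective.1 hf)⟩, ?_⟩
  refine ⟨fun v => if hv : v ∈ S then (e.symm ⟨v, hv⟩ : ℕ) else 0, ?_, ?_⟩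
  · intro a ha b hb hab
    have ha' : a ∈ S := by simpa [S] using ha
    have hb' : b ∈ S := by simpa [S] using hb
    simp only [dif_pos ha', dif_pos hb']
    have : e.symm ⟨a, ha'⟩ < e.symm ⟨b, hb'⟩ := e.symm.lt_iff_lt.2 hab
    exact this
  · apply List.ext_getElem
    · simp [wd]
    · intro i h1 h2
      simp [wd, f, S]

theorem mu_sum_word (s : List ℕ) (hs : s.Nodup) (n : ℕ) (h : 2 ≤ s.length) (hn : s.length ≤ n) :
    ∑ m ∈ Finset.range (n + 1), ∑ p : Equiv.Perm (Fin m),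
      (if PL (wd ⟨m, p⟩) s then mu PPerm.one ⟨m, p⟩ else 0) = 0 := by
  obtain ⟨ρ, hρ⟩ := exists_perm s hs
  have hl : ρ.1 = s.length := by rw [← wd_length, hρ.length]
  refine Eq.trans ?_ (mu_sum ρ n (by omega) (by omega))
  refine Finset.sum_congr rfl fun m _ => Finset.sum_congr rfl fun p _ => ?_
  have : PL (wd ⟨m, p⟩) s ↔ PPerm.Le ⟨m, p⟩ ρ := by
    rw [le_iff_PL]
    exact ⟨fun h => h.trans (PL.of_OI hρ.symm), fun h => h.trans (PL.of_OI hρ)⟩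
  simp only [this]

/-- every entry of `r` lies below all entries of `y`, or above all entries of `y`. -/
def Sepd (y r : List ℕ) : Prop := ∀ c ∈ r, (∀ d ∈ y, c < d) ∨ (∀ d ∈ y, d < c)

/-- The word `w` has an interval copy of the word `x`. -/
def Iv (w x : List ℕ) : Prop :=
  ∃ p y q : List ℕ, w = p ++ (y ++ q) ∧ OI x y ∧ Sepd y (p ++ q)

theorem Sepd.mono {y r y' r' : List ℕ} (h : Sepd y r) (hy : ∀ d ∈ y', d ∈ y)
    (hr : ∀ c ∈ r', c ∈ r) : Sepd y' r' := by
  intro c hc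
  rcases h c (hr c hc) with h1 | h1
  · exact Or.inl fun d hd => h1 d (hy d hd)
  · exact Or.inr fun d hd => h1 d (hy d hd)

theorem Sepd.map {y r : List ℕ} {g : ℕ → ℕ} (h : Sepd y r) (hg : MonoOn g (y ++ r)) :
    Sepd (y.map g) (r.map g) := by
  intro c' hc'
  obtain ⟨c, hc, rfl⟩ := List.mem_map.1 hc'
  rcases h c hc with h1 | h1
  · left
    intro d' hd'
    obtain ⟨d, hd, rfl⟩ := List.mem_map.1 hd'
    exact hg _ (by simp [hc]) _ (by simp [hd]) (h1 d hd)
  · right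
    intro d' hd'
    obtain ⟨d, hd, rfl⟩ := List.mem_map.1 hd'
    exact hg _ (by simp [hd]) _ (by simp [hc]) (h1 d hd)

theorem Iv.of_OI {w w' x : List ℕ} (h : OI w w') (hi : Iv w x) : Iv w' x := by
  obtain ⟨g, hg, rfl⟩ := h
  obtain ⟨p, y, q, rfl, ho, hs⟩ := hi
  refine ⟨p.map g, y.map g, q.map g, by simp, ho.trans ⟨g, hg.mono ?_, rfl⟩, ?_⟩
  · intro a ha; simp [ha]
  · rw [← List.map_append]
    refine hs.map (hg.mono ?_)
    intro a ha
    simp only [List.mem_append] at ha ⊢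
    tauto

theorem Iv.trans {w x z : List ℕ} (h : Iv w x) (h' : Iv x z) : Iv w z := by
  obtain ⟨p, y, q, rfl, ho, hs⟩ := h
  obtain ⟨p', y', q', rfl, ho', hs'⟩ := h'.of_OI ho
  refine ⟨p ++ p', y', q' ++ q, by simp, ho', ?_⟩
  intro c hc
  by_cases hcc : c ∈ p' ++ q'
  · exact hs' c hcc
  · have : c ∈ p ++ q := by
      simp only [List.mem_append] at hc hcc ⊢
      tauto
    exact (hs.mono (y' := y') (fun d hd => by simp [hd]) (fun c hc => hc)) c this

theorem Iv.empty (w : List ℕ) : Iv w [] :=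
  ⟨[], [], w, by simp, OI.refl _, by intro c _; left; simp⟩

theorem Iv.congr {w x x' : List ℕ} (h : Iv w x) (ho : OI x x') : Iv w x' := by
  obtain ⟨p, y, q, hw, ho', hs⟩ := h
  exact ⟨p, y, q, hw, ho.symm.trans ho', hs⟩

theorem replace_OI {p u y q Y : List ℕ} (ho : OI u y) (hu : ∀ d ∈ u, d ∈ Y) (hy : ∀ d ∈ y, d ∈ Y)
    (hs : Sepd Y (p ++ q)) : OI (p ++ (u ++ q)) (p ++ (y ++ q)) := by
  obtain ⟨g, hg, rfl⟩ := ho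
  have hnot : ∀ c ∈ p ++ q, c ∉ u := by
    intro c hc hcu
    rcases hs c hc with h | h
    · exact lt_irrefl _ (h c (hu c hcu))
    · exact lt_irrefl _ (h c (hu c hcu))
  refine ⟨fun d => if d ∈ u then g d else d, ?_, ?_⟩
  · intro a ha b hb hab
    have hmem : ∀ c, c ∈ p ++ (u ++ q) → c ∉ u → c ∈ p ++ q := by
      intro c hc hcu
      simp only [List.mem_append] at hc ⊢
      tauto
    by_cases hau : a ∈ u <;> by_cases hbu : b ∈ u
    · simp only [hau, hbu, if_true]
      exact hg a hau b hbu hab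
    · simp only [hau, hbu, if_true, if_false]
      rcases hs b (hmem b hb hbu) with h | h
      · have := h a (hu a hau); omega
      · exact h _ (hy _ (List.mem_map_of_mem hau))
    · simp only [hau, hbu, if_true, if_false]
      rcases hs a (hmem a ha hau) with h | h
      · exact h _ (hy _ (List.mem_map_of_mem hbu))
      · have := h b (hu b hbu); omega
    · simp only [hau, hbu, if_false]
      exact hab
  · simp only [List.map_append]
    have h1 : ∀ l : List ℕ, (∀ c ∈ l, c ∈ p ++ q) →
        l.map (fun d => if d ∈ u then g d else d) = l := by
      intro l hl
      conv_rhs => rw [← List.map_id l]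
      refine List.map_congr_left fun c hc => ?_
      simp [hnot c (hl c hc)]
    rw [h1 p (fun c hc => by simp [hc]), h1 q (fun c hc => by simp [hc])]
    congr 2
    refine List.map_congr_left fun c hc => ?_
    simp [hc]

/-- Two disjoint interval copies. -/
def Two (w x x' : List ℕ) : Prop :=
  ∃ p y q z r : List ℕ, w = p ++ (y ++ (q ++ (z ++ r))) ∧ OI x y ∧ OI x' z ∧
    Sepd y (p ++ (q ++ (z ++ r))) ∧ Sepd z (p ++ (y ++ (q ++ r)))

/-- The abstract setting in which sub-patterns of `w` are described by types. -/
def Frame (w x x' : List ℕ) : Prop :=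
  ∃ (core : List ℕ → List ℕ → List ℕ) (K : ℕ) (Real : List ℕ → List ℕ → List ℕ → Prop),
    w.length = x.length + x'.length + K ∧ PL w (core x x') ∧
    (∀ a b, a.Sublist x → b.Sublist x' → (core a b).Sublist w ∧
      (core a b).length = a.length + b.length + K) ∧
    (∀ a b, a.Sublist x → b.Sublist x' → ∀ u, PL u (core a b) →
      ∃ c d, c.Sublist a ∧ d.Sublist b ∧ Real c d u) ∧
    (∀ a b, a.Sublist x → b.Sublist x' → ∀ u c d, PL c a → PL d b → Real c d u →
      PL u (core a b)) ∧
    (∀ c d u, Real c d u → Iv u c ∧ Iv u d) ∧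
    (∀ c d c' d' u, OI c c' → OI d d' → Real c d u → Real c' d' u)

theorem Frame.swap {w x x' : List ℕ} (h : Frame w x x') : Frame w x' x := by
  obtain ⟨core, K, R, h1, h2, h3, h4, h5, h6, h7⟩ := h
  refine ⟨fun a b => core b a, K, fun c d u => R d c u, by omega, h2, ?_, ?_, ?_, ?_, ?_⟩
  · intro a b ha hb
    obtain ⟨e1, e2⟩ := h3 b a hb ha
    exact ⟨e1, by show (core b a).length = _; omega⟩
  · intro a b ha hb u hu
    obtain ⟨c, d, hc, hd, hr⟩ := h4 b a hb ha u hu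
    exact ⟨d, c, hd, hc, hr⟩
  · intro a b ha hb u c d hc hd hr
    exact h5 b a hb ha u d c hd hc hr
  · intro c d u hr
    exact (h6 d c u hr).symm
  · intro c d c' d' u hc hd hr
    exact h7 d c d' c' u hd hc hr

theorem Two.frame {w x x' : List ℕ} (h : Two w x x') : Frame w x x' := by
  obtain ⟨P, Y, Q, Z, R, rfl, ⟨g, hg, rfl⟩, ⟨k, hk, rfl⟩, hsY, hsZ⟩ := h
  refine ⟨fun a b => P ++ (a.map g ++ (Q ++ (b.map k ++ R))), P.length + Q.length + R.length,
    fun c d u => ∃ p y q z r : List ℕ, p.Sublist P ∧ y.Sublist (x.map g) ∧ q.Sublist Q ∧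
      z.Sublist (x'.map k) ∧ r.Sublist R ∧ OI y c ∧ OI z d ∧ OI (p ++ (y ++ (q ++ (z ++ r)))) u,
    ?_, ?_, ?_, ?_, ?_, ?_, ?_⟩
  · simp only [List.length_append, List.length_map]; omega
  · exact PL.of_OI (OI.refl _)
  · intro a b ha hb
    constructor
    · exact (List.Sublist.refl P).append ((ha.map g).append ((List.Sublist.refl Q).append
        ((hb.map k).append (List.Sublist.refl R))))
    · simp only [List.length_append, List.length_map]; omega
  · rintro a b ha hb u ⟨s, hs, ho⟩
    obtain ⟨p, s1, rfl, hp, hs1⟩ := List.sublist_append_iff.1 hs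
    obtain ⟨y, s2, rfl, hy, hs2⟩ := List.sublist_append_iff.1 hs1
    obtain ⟨q, s3, rfl, hq, hs3⟩ := List.sublist_append_iff.1 hs2
    obtain ⟨z, r, rfl, hz, hr⟩ := List.sublist_append_iff.1 hs3
    obtain ⟨c, hc, rfl⟩ := List.sublist_map_iff.1 hy
    obtain ⟨d, hd, rfl⟩ := List.sublist_map_iff.1 hz
    refine ⟨c, d, hc, hd, p, c.map g, q, d.map k, r, hp, (hc.trans ha).map g, hq,
      (hd.trans hb).map k, hr, ?_, ?_, ho⟩
    · exact OI.symm ⟨g, hg.mono fun e he => (hc.trans ha).subset he, rfl⟩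
    · exact OI.symm ⟨k, hk.mono fun e he => (hd.trans hb).subset he, rfl⟩
  · rintro a b ha hb u c d hc hd ⟨p, y, q, z, r, hp, hy, hq, hz, hr, hoy, hoz, ho⟩
    have hca : PL y (a.map g) :=
      (PL.of_OI hoy.symm).trans (hc.trans (PL.of_OI (OI.symm
        ⟨g, hg.mono fun e he => ha.subset he, rfl⟩)))
    have hdb : PL z (b.map k) :=
      (PL.of_OI hoz.symm).trans (hd.trans (PL.of_OI (OI.symm
        ⟨k, hk.mono fun e he => hb.subset he, rfl⟩)))
    obtain ⟨u1, hu1, ho1⟩ := hca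
    obtain ⟨v1, hv1, hov⟩ := hdb
    have hu1x : u1.Sublist (x.map g) := hu1.trans (ha.map g)
    have hv1x : v1.Sublist (x'.map k) := hv1.trans (hb.map k)
    refine ⟨p ++ (u1 ++ (q ++ (v1 ++ r))), hp.append (hu1.append (hq.append (hv1.append hr))), ?_⟩
    have e1 : OI (p ++ (u1 ++ (q ++ (v1 ++ r)))) (p ++ (y ++ (q ++ (v1 ++ r)))) := by
      refine replace_OI (Y := x.map g) ho1 (fun e he => hu1x.subset he)
        (fun e he => hy.subset he) (hsY.mono (fun _ h => h) ?_)
      exact fun e he => (hp.append (hq.append (hv1x.append hr))).subset he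
    have e2 : OI (p ++ (y ++ (q ++ (v1 ++ r)))) (p ++ (y ++ (q ++ (z ++ r)))) := by
      have := replace_OI (p := p ++ (y ++ q)) (q := r) (Y := x'.map k) hov
        (fun e he => hv1x.subset he) (fun e he => hz.subset he) (hsZ.mono (fun _ h => h) ?_)
      · simpa only [List.append_assoc] using this
      · intro e he
        have := (hp.append (hy.append (hq.append hr))).subset (a := e)
        apply this
        simpa only [List.append_assoc] using he
    exact (e1.trans e2).trans ho
  · rintro c d u ⟨p, y, q, z, r, hp, hy, hq, hz, hr, hoy, hoz, ho⟩
    constructor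
    · refine Iv.of_OI ho ⟨p, y, q ++ (z ++ r), rfl, hoy.symm, ?_⟩
      exact hsY.mono (fun e he => hy.subset he)
        (fun e he => (hp.append (hq.append (hz.append hr))).subset he)
    · refine Iv.of_OI ho ⟨p ++ (y ++ q), z, r, by simp only [List.append_assoc], hoz.symm, ?_⟩
      refine hsZ.mono (fun e he => hz.subset he) ?_
      intro e he
      have := (hp.append (hy.append (hq.append hr))).subset (a := e)
      apply this
      simpa only [List.append_assoc] using he
  · rintro c d c' d' u hc hd ⟨p, y, q, z, r, hp, hy, hq, hz, hr, hoy, hoz, ho⟩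
    exact ⟨p, y, q, z, r, hp, hy, hq, hz, hr, hoy.trans hc, hoz.trans hd, ho⟩

theorem Iv.frame {w x : List ℕ} (h : Iv w x) : Frame w x [] := by
  obtain ⟨p, y, q, rfl, ho, hs⟩ := h
  refine Two.frame ⟨p, y, q, [], [], by simp, ho, OI.refl _, by simpa using hs, ?_⟩
  intro c _; left; simp

/-! ### Decidable checks -/

/-- Boolean equality of words. -/
def leqb : List ℕ → List ℕ → Bool
  | [], [] => true
  | a :: x, b :: y => Nat.beq a b && leqb x y
  | _, _ => false

/-- Boolean membership of a word in a list of words. -/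
def memb (x : List ℕ) : List (List ℕ) → Bool
  | [] => false
  | y :: l => leqb x y || memb x l

theorem leqb_eq : ∀ {x y : List ℕ}, leqb x y = true → x = y
  | [], [], _ => rfl
  | a :: x, b :: y, h => by
    simp only [leqb, Bool.and_eq_true] at h
    rw [Nat.eq_of_beq_eq_true h.1, leqb_eq h.2]
  | [], b :: y, h => by simp [leqb] at h
  | a :: x, [], h => by simp [leqb] at h

theorem leqb_refl : ∀ x : List ℕ, leqb x x = true
  | [] => rfl
  | a :: x => by simp [leqb, leqb_refl x]

theorem memb_iff {x : List ℕ} {l : List (List ℕ)} : memb x l = true ↔ x ∈ l := by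
  induction l with
  | nil => simp [memb]
  | cons y l ih =>
    simp only [memb, Bool.or_eq_true, ih, List.mem_cons]
    constructor
    · rintro (h | h)
      · exact Or.inl (leqb_eq h)
      · exact Or.inr h
    · rintro (rfl | h)
      · exact Or.inl (leqb_refl _)
      · exact Or.inr h

/-- The number of entries smaller than `d`. -/
def cnt (d : ℕ) : List ℕ → ℕ
  | [] => 0
  | a :: l => bif Nat.blt a d then cnt d l + 1 else cnt d l

/-- Standardization of a word. -/
def stdw (x : List ℕ) : List ℕ := x.map (fun d => cnt d x)

theorem cnt_mono {a b : ℕ} (h : a ≤ b) : ∀ l : List ℕ, cnt a l ≤ cnt b l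
  | [] => le_rfl
  | c :: l => by
    have ih := cnt_mono h l
    have h1 : ∀ d, Nat.blt c d = decide (c < d) := by
      intro d; rw [Bool.eq_iff_iff]; simp [Nat.blt_eq]
    simp only [cnt, h1]
    by_cases h2 : c < a
    · have h3 : c < b := by omega
      simp [h2, h3, ih]
    · by_cases h3 : c < b
      · simp [h2, h3]; omega
      · simp [h2, h3, ih]

theorem cnt_lt {a b : ℕ} (h : a < b) : ∀ l : List ℕ, a ∈ l → cnt a l < cnt b l
  | [], hm => by simp at hm
  | c :: l, hm => by
    have h1 : ∀ d, Nat.blt c d = decide (c < d) := by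
      intro d; rw [Bool.eq_iff_iff]; simp [Nat.blt_eq]
    simp only [cnt, h1]
    rcases List.mem_cons.1 hm with rfl | hm
    · have := cnt_mono h.le l
      simp [h]; omega
    · have ih := cnt_lt h l hm
      by_cases h2 : c < a
      · have h3 : c < b := by omega
        simp [h2, h3, ih]
      · by_cases h3 : c < b
        · simp [h2, h3]; omega
        · simp [h2, h3, ih]

theorem OI_stdw (x : List ℕ) : OI x (stdw x) :=
  ⟨fun d => cnt d x, fun _ ha _ _ hab => cnt_lt hab x ha, rfl⟩

/-- All sublists of a word. -/
def subsw : List ℕ → List (List ℕ)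
  | [] => [[]]
  | a :: l => subsw l ++ (subsw l).map (fun t => a :: t)

theorem mem_subsw {x a : List ℕ} : x ∈ subsw a ↔ x.Sublist a := by
  induction a generalizing x with
  | nil => simp [subsw]
  | cons a l ih =>
    simp only [subsw, List.mem_append, List.mem_map, ih, List.sublist_cons_iff]
    constructor
    · rintro (h | ⟨t, h, rfl⟩)
      · exact Or.inl h
      · exact Or.inr ⟨t, rfl, h⟩
    · rintro (h | ⟨t, rfl, h⟩)
      · exact Or.inl h
      · exact Or.inr ⟨t, h, rfl⟩

/-- Removal of duplicates. -/
def ddw : List (List ℕ) → List (List ℕ)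
  | [] => []
  | x :: l => bif memb x (ddw l) then ddw l else x :: ddw l

theorem mem_ddw {x : List ℕ} {l : List (List ℕ)} : x ∈ ddw l ↔ x ∈ l := by
  induction l generalizing x with
  | nil => simp [ddw]
  | cons y l ih =>
    simp only [ddw]
    by_cases h : memb y (ddw l) = true
    · rw [h]
      simp only [cond_true, List.mem_cons, ih]
      rw [memb_iff, ih] at h
      constructor
      · exact Or.inr
      · rintro (rfl | h')
        · exact h
        · exact h'
    · simp only [Bool.not_eq_true] at h
      rw [h]
      simp [ih]

/-- The patterns contained in a word. -/
def pats (a : List ℕ) : List (List ℕ) := ddw ((subsw a).map stdw)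

theorem pats_sound {c a : List ℕ} (h : c ∈ pats a) : PL c a := by
  rw [pats, mem_ddw, List.mem_map] at h
  obtain ⟨s, hs, rfl⟩ := h
  exact ⟨s, mem_subsw.1 hs, OI_stdw s⟩

theorem pats_complete {c a : List ℕ} (h : c.Sublist a) : stdw c ∈ pats a := by
  rw [pats, mem_ddw, List.mem_map]
  exact ⟨c, mem_subsw.2 h, rfl⟩

/-- Boolean version of `Sepd`. -/
def sepb (y r : List ℕ) : Bool :=
  r.all fun c => y.all (fun d => Nat.blt c d) || y.all (fun d => Nat.blt d c)

theorem sepb_sound {y r : List ℕ} (h : sepb y r = true) : Sepd y r := by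
  intro c hc
  have := List.all_eq_true.1 h c hc
  simp only [Bool.or_eq_true, List.all_eq_true, Nat.blt_eq] at this
  exact this

/-- Patterns of the intervals of a word. -/
def ivs (x : List ℕ) : List (List ℕ) :=
  ddw ((List.range (x.length + 1)).flatMap fun i =>
    (List.range (x.length + 1 - i)).flatMap fun k =>
      bif sepb ((x.drop i).take k) (x.take i ++ (x.drop i).drop k)
      then [stdw ((x.drop i).take k)] else [])

theorem ivs_sound {x z : List ℕ} (h : z ∈ ivs x) : Iv x z := by
  rw [ivs, mem_ddw, List.mem_flatMap] at h
  obtain ⟨i, -, h⟩ := h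
  rw [List.mem_flatMap] at h
  obtain ⟨k, -, h⟩ := h
  by_cases hs : sepb ((x.drop i).take k) (x.take i ++ (x.drop i).drop k) = true
  · rw [hs] at h
    simp only [cond_true, List.mem_singleton] at h
    subst h
    exact ⟨x.take i, (x.drop i).take k, (x.drop i).drop k, by simp, (OI_stdw _).symm,
      sepb_sound hs⟩
  · simp only [Bool.not_eq_true] at hs
    rw [hs] at h
    simp at h

/-- `L` contains both words of some known fact. -/
def hasFact (facts : List (List ℕ × List ℕ)) (L : List (List ℕ)) : Bool :=
  facts.any fun F => memb F.1 L && memb F.2 L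

/-- Componentwise pattern containment. -/
def tle (t a : List ℕ × List ℕ) : Bool := memb t.1 (pats a.1) && memb t.2 (pats a.2)

/-- Every type is either excluded by a fact or contained in one of the cores. -/
def chk1 (facts : List (List ℕ × List ℕ)) (φ a b c : List ℕ × List ℕ) : Bool :=
  (pats φ.1).all fun x => (pats φ.2).all fun y =>
    tle (x, y) a || tle (x, y) b || tle (x, y) c || hasFact facts (ivs x ++ ivs y)

/-- Permutations below both `a` and `b` are below `g`, or below both of `h` and `k`, unless
excluded by a fact. -/
def chk2 (facts : List (List ℕ × List ℕ)) (a b g h k : List ℕ × List ℕ) : Bool :=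
  (pats a.1).all fun x => (pats a.2).all fun y => tle (x, y) g ||
    ((pats b.1).all fun x' => (pats b.2).all fun y' => tle (x', y') g ||
      ((tle (x, y) h || tle (x', y') h) && (tle (x, y) k || tle (x', y') k)) ||
      hasFact facts (ivs x ++ ivs y ++ (ivs x' ++ ivs y')))

/-- `g` is a legal core below `a` and `b`. -/
def chk3 (φ g a b : List ℕ × List ℕ) : Bool :=
  memb g.1 (subsw φ.1) && memb g.2 (subsw φ.2) && Nat.ble 2 (g.1.length + g.2.length) &&
    Nat.blt (g.1.length + g.2.length) (φ.1.length + φ.2.length) &&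
    tle (stdw g.1, stdw g.2) a && tle (stdw g.1, stdw g.2) b

/-- The complete certificate check. -/
def chk (facts : List (List ℕ × List ℕ)) (φ a b c ab ac bc abc : List ℕ × List ℕ) : Bool :=
  chk3 φ a a a && chk3 φ b b b && chk3 φ c c c && chk3 φ ab a b && chk3 φ ac a c &&
  chk3 φ bc b c && chk3 φ abc ab ac && chk3 φ abc bc bc && chk1 (φ :: facts) φ a b c &&
  chk2 (φ :: facts) a b ab ac bc && chk2 (φ :: facts) a c ac ab bc &&
  chk2 (φ :: facts) b c bc ab ac && chk2 (φ :: facts) ab bc abc abc abc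

/-- Permutations with interval copies of both words have vanishing principal Möbius function. -/
def ZeroF (F : List ℕ × List ℕ) : Prop :=
  ∀ ρ : PPerm, Iv (wd ρ) F.1 → Iv (wd ρ) F.2 → mu PPerm.one ρ = 0

theorem tle_sound {t a : List ℕ × List ℕ} (h : tle t a = true) : PL t.1 a.1 ∧ PL t.2 a.2 := by
  simp only [tle, Bool.and_eq_true, memb_iff] at h
  exact ⟨pats_sound h.1, pats_sound h.2⟩

theorem hasFact_sound {facts : List (List ℕ × List ℕ)} {L : List (List ℕ)} {u : List ℕ}
    (hL : ∀ z ∈ L, Iv u z) (h : hasFact facts L = true) : ∃ F ∈ facts, Iv u F.1 ∧ Iv u F.2 := by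
  simp only [hasFact, List.any_eq_true, Bool.and_eq_true, memb_iff] at h
  obtain ⟨F, hF, h1, h2⟩ := h
  exact ⟨F, hF, hL _ h1, hL _ h2⟩

theorem incl_excl {W A B C AB AC BC ABC : Prop} (ea : A → W) (eb : B → W) (ec : C → W)
    (iab : AB → A ∧ B) (iac : AC → A ∧ C) (ibc : BC → B ∧ C) (iabc : ABC → AB ∧ AC ∧ BC)
    (eab : A → B → AB ∨ AC ∧ BC) (eac : A → C → AC ∨ AB ∧ BC) (ebc : B → C → BC ∨ AB ∧ AC)
    (eabc : AB → BC → ABC) (hcov : W → A ∨ B ∨ C) (m : ℤ) :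
    (if W then m else 0) = (if A then m else 0) + (if B then m else 0) + (if C then m else 0) -
      (if AB then m else 0) - (if AC then m else 0) - (if BC then m else 0) +
      (if ABC then m else 0) := by
  have hw : W ↔ A ∨ B ∨ C := ⟨hcov, fun h => h.elim ea fun h => h.elim eb ec⟩
  have hq : ABC ↔ AB ∧ AC ∧ BC := ⟨iabc, fun h => eabc h.1 h.2.2⟩
  rw [if_congr hw rfl rfl, if_congr hq rfl rfl]
  clear hw hq hcov ea eb ec iabc eabc
  by_cases pa : A <;> by_cases pb : B <;> by_cases pc : C <;>
    by_cases pab : AB <;> by_cases pac : AC <;> by_cases pbc : BC <;>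
    simp only [pa, pb, pc, pab, pac, pbc, true_and, and_true, false_and, and_false, or_false,
      or_true, false_or, true_or, forall_const, imp_false, not_true_eq_false, not_false_eq_true,
      if_true, if_false, false_imp_iff, or_self, and_self] at * <;> ring1

theorem engine (facts : List (List ℕ × List ℕ)) (φ a b c ab ac bc abc : List ℕ × List ℕ)
    (hfacts : ∀ F ∈ facts, ZeroF F)
    (hframe : ∀ w : List ℕ, w.Nodup → Iv w φ.1 → Iv w φ.2 → Frame w φ.1 φ.2)
    (hchk : chk facts φ a b c ab ac bc abc = true) : ZeroF φ := by
  have key : ∀ N : ℕ, ∀ ρ : PPerm, ρ.1 = N → Iv (wd ρ) φ.1 → Iv (wd ρ) φ.2 →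
      mu PPerm.one ρ = 0 := by
    intro N
    induction N using Nat.strong_induction_on with
    | _ N IH =>
    intro ρ hρ hi1 hi2
    have hno : ∀ lam : PPerm, lam.1 < N → mu PPerm.one lam ≠ 0 →
        ¬ ∃ F ∈ φ :: facts, Iv (wd lam) F.1 ∧ Iv (wd lam) F.2 := by
      rintro lam hlam hne ⟨F, hF, h1, h2⟩
      rcases List.mem_cons.1 hF with rfl | hF
      · exact hne (IH lam.1 hlam lam rfl h1 h2)
      · exact hne (hfacts F hF lam h1 h2)
    obtain ⟨core, K, R, f1, f2, f3, f4, f5, f6, f7⟩ := hframe (wd ρ) (wd_nodup ρ) hi1 hi2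
    simp only [chk, Bool.and_eq_true] at hchk
    obtain ⟨⟨⟨⟨⟨⟨⟨⟨⟨⟨⟨⟨ka, kb⟩, kc⟩, kab⟩, kac⟩, kbc⟩, kabc⟩, kabc'⟩, k1⟩, k2ab⟩, k2ac⟩, k2bc⟩,
      k2abc⟩ := hchk
    -- consequences of `chk3`
    have hc3 : ∀ g x y : List ℕ × List ℕ, chk3 φ g x y = true →
        g.1.Sublist φ.1 ∧ g.2.Sublist φ.2 ∧ 2 ≤ g.1.length + g.2.length ∧
        g.1.length + g.2.length < φ.1.length + φ.2.length ∧
        (PL g.1 x.1 ∧ PL g.2 x.2) ∧ (PL g.1 y.1 ∧ PL g.2 y.2) := by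
      intro g x y h
      simp only [chk3, Bool.and_eq_true, memb_iff, mem_subsw, Nat.blt_eq] at h
      obtain ⟨⟨⟨⟨⟨h1, h2⟩, h3⟩, h4⟩, h5⟩, h6⟩ := h
      have h5 := tle_sound h5
      have h6 := tle_sound h6
      have e1 := PL.of_OI (OI_stdw g.1).symm
      have e2 := PL.of_OI (OI_stdw g.2).symm
      exact ⟨h1, h2, Nat.le_of_ble_eq_true h3, h4, ⟨e1.trans h5.1, e2.trans h5.2⟩,
        ⟨e1.trans h6.1, e2.trans h6.2⟩⟩
    obtain ⟨a1, a2, a3, a4, -, -⟩ := hc3 _ _ _ ka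
    obtain ⟨b1, b2, b3, b4, -, -⟩ := hc3 _ _ _ kb
    obtain ⟨c1, c2, c3, c4, -, -⟩ := hc3 _ _ _ kc
    obtain ⟨ab1, ab2, ab3, ab4, ab5, ab6⟩ := hc3 _ _ _ kab
    obtain ⟨ac1, ac2, ac3, ac4, ac5, ac6⟩ := hc3 _ _ _ kac
    obtain ⟨bc1, bc2, bc3, bc4, bc5, bc6⟩ := hc3 _ _ _ kbc
    obtain ⟨abc1, abc2, abc3, abc4, abc5, abc6⟩ := hc3 _ _ _ kabc
    obtain ⟨-, -, -, -, abc7, -⟩ := hc3 _ _ _ kabc'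
    have hmono : ∀ g x : List ℕ × List ℕ, g.1.Sublist φ.1 → g.2.Sublist φ.2 →
        x.1.Sublist φ.1 → x.2.Sublist φ.2 → PL g.1 x.1 ∧ PL g.2 x.2 → ∀ u,
        PL u (core g.1 g.2) → PL u (core x.1 x.2) := by
      intro g x g1 g2 x1 x2 hp u hu
      obtain ⟨s, t, hs, ht, hr⟩ := f4 _ _ g1 g2 u hu
      exact f5 _ _ x1 x2 u s t ((PL.of_sublist hs).trans hp.1) ((PL.of_sublist ht).trans hp.2) hr
    have htype : ∀ g : List ℕ × List ℕ, g.1.Sublist φ.1 → g.2.Sublist φ.2 → ∀ u,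
        PL u (core g.1 g.2) → ∃ s t, s ∈ pats g.1 ∧ t ∈ pats g.2 ∧ R s t u := by
      intro g g1 g2 u hu
      obtain ⟨s, t, hs, ht, hr⟩ := f4 _ _ g1 g2 u hu
      exact ⟨stdw s, stdw t, pats_complete hs, pats_complete ht,
        f7 _ _ _ _ _ (OI_stdw s) (OI_stdw t) hr⟩
    have hin : ∀ g : List ℕ × List ℕ, g.1.Sublist φ.1 → g.2.Sublist φ.2 → ∀ u s t,
        R s t u → tle (s, t) g = true → PL u (core g.1 g.2) := by
      intro g g1 g2 u s t hr ht
      have := tle_sound ht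
      exact f5 _ _ g1 g2 u s t this.1 this.2 hr
    have hiv : ∀ s t u, R s t u → ∀ z ∈ ivs s ++ ivs t, Iv u z := by
      intro s t u hr z hz
      have := f6 _ _ _ hr
      rcases List.mem_append.1 hz with h | h
      · exact this.1.trans (ivs_sound h)
      · exact this.2.trans (ivs_sound h)
    have hmeet : ∀ x y g h k : List ℕ × List ℕ, x.1.Sublist φ.1 ∧ x.2.Sublist φ.2 →
        y.1.Sublist φ.1 ∧ y.2.Sublist φ.2 → g.1.Sublist φ.1 ∧ g.2.Sublist φ.2 →
        h.1.Sublist φ.1 ∧ h.2.Sublist φ.2 → k.1.Sublist φ.1 ∧ k.2.Sublist φ.2 →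
        chk2 (φ :: facts) x y g h k = true → ∀ u,
        (¬ ∃ F ∈ φ :: facts, Iv u F.1 ∧ Iv u F.2) →
        PL u (core x.1 x.2) → PL u (core y.1 y.2) →
        PL u (core g.1 g.2) ∨ (PL u (core h.1 h.2) ∧ PL u (core k.1 k.2)) := by
      intro x y g h k x1 y1 g1 hh1 k1 hch u hn hx hy
      obtain ⟨s, t, hs, ht, hr⟩ := htype x x1.1 x1.2 u hx
      obtain ⟨s', t', hs', ht', hr'⟩ := htype y y1.1 y1.2 u hy
      have h1 := List.all_eq_true.1 (List.all_eq_true.1 hch s hs) t ht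
      rcases Bool.or_eq_true_iff.1 h1 with h2 | h2
      · exact Or.inl (hin g g1.1 g1.2 u s t hr h2)
      have h3 := List.all_eq_true.1 (List.all_eq_true.1 h2 s' hs') t' ht'
      rcases Bool.or_eq_true_iff.1 h3 with h4 | h4
      · rcases Bool.or_eq_true_iff.1 h4 with h5 | h5
        · exact Or.inl (hin g g1.1 g1.2 u s' t' hr' h5)
        · right
          simp only [Bool.and_eq_true, Bool.or_eq_true] at h5
          constructor
          · rcases h5.1 with h6 | h6
            · exact hin h hh1.1 hh1.2 u s t hr h6
            · exact hin h hh1.1 hh1.2 u s' t' hr' h6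
          · rcases h5.2 with h6 | h6
            · exact hin k k1.1 k1.2 u s t hr h6
            · exact hin k k1.1 k1.2 u s' t' hr' h6
      exfalso
      refine hn (hasFact_sound ?_ h4)
      intro z hz
      rcases List.mem_append.1 hz with h5 | h5
      · exact hiv s t u hr z h5
      · exact hiv s' t' u hr' z h5
    have hcover : ∀ u, (¬ ∃ F ∈ φ :: facts, Iv u F.1 ∧ Iv u F.2) → PL u (wd ρ) →
        PL u (core a.1 a.2) ∨ PL u (core b.1 b.2) ∨ PL u (core c.1 c.2) := by
      intro u hn hu
      obtain ⟨s, t, hs, ht, hr⟩ := htype φ (List.Sublist.refl _) (List.Sublist.refl _) u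
        (hu.trans f2)
      have h1 := List.all_eq_true.1 (List.all_eq_true.1 k1 s hs) t ht
      simp only [Bool.or_eq_true] at h1
      rcases h1 with ((h1 | h1) | h1) | h1
      · exact Or.inl (hin a a1 a2 u s t hr h1)
      · exact Or.inr (Or.inl (hin b b1 b2 u s t hr h1))
      · exact Or.inr (Or.inr (hin c c1 c2 u s t hr h1))
      · exact absurd (hasFact_sound (hiv s t u hr) h1) hn
    have hsum : ∀ g : List ℕ × List ℕ, g.1.Sublist φ.1 → g.2.Sublist φ.2 →
        2 ≤ g.1.length + g.2.length → g.1.length + g.2.length < φ.1.length + φ.2.length →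
        ∑ m ∈ Finset.range (N + 1), ∑ p : Equiv.Perm (Fin m),
          (if PL (wd ⟨m, p⟩) (core g.1 g.2) then mu PPerm.one ⟨m, p⟩ else 0) = 0 := by
      intro g g1 g2 h1 h2
      obtain ⟨e1, e2⟩ := f3 _ _ g1 g2
      have hl := wd_length ρ
      exact mu_sum_word _ (e1.nodup (wd_nodup ρ)) N (by omega) (by omega)
    have hw : ∑ m ∈ Finset.range (N + 1), ∑ p : Equiv.Perm (Fin m),
          (if PL (wd ⟨m, p⟩) (wd ρ) then mu PPerm.one ⟨m, p⟩ else 0) = 0 := by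
      have hl := wd_length ρ
      exact mu_sum_word _ (wd_nodup ρ) N (by omega) (by omega)
    have sa := hsum a a1 a2 a3 a4
    have sb := hsum b b1 b2 b3 b4
    have sc := hsum c c1 c2 c3 c4
    have sab := hsum ab ab1 ab2 ab3 ab4
    have sac := hsum ac ac1 ac2 ac3 ac4
    have sbc := hsum bc bc1 bc2 bc3 bc4
    have sabc := hsum abc abc1 abc2 abc3 abc4
    have hlow : ∀ lam : PPerm, lam.1 < N →
        (if PL (wd lam) (wd ρ) then mu PPerm.one lam else 0) =
        (if PL (wd lam) (core a.1 a.2) then mu PPerm.one lam else 0) +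
        (if PL (wd lam) (core b.1 b.2) then mu PPerm.one lam else 0) +
        (if PL (wd lam) (core c.1 c.2) then mu PPerm.one lam else 0) -
        (if PL (wd lam) (core ab.1 ab.2) then mu PPerm.one lam else 0) -
        (if PL (wd lam) (core ac.1 ac.2) then mu PPerm.one lam else 0) -
        (if PL (wd lam) (core bc.1 bc.2) then mu PPerm.one lam else 0) +
        (if PL (wd lam) (core abc.1 abc.2) then mu PPerm.one lam else 0) := by
      intro lam hlam
      by_cases hne : mu PPerm.one lam = 0
      · simp [hne]
      have hn := hno lam hlam hne
      have hsub : ∀ g : List ℕ × List ℕ, g.1.Sublist φ.1 → g.2.Sublist φ.2 →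
          PL (wd lam) (core g.1 g.2) → PL (wd lam) (wd ρ) := fun g g1 g2 h =>
        h.trans (PL.of_sublist (f3 _ _ g1 g2).1)
      have ea := hsub a a1 a2
      have eb := hsub b b1 b2
      have ec := hsub c c1 c2
      have iab := fun h => And.intro (hmono ab a ab1 ab2 a1 a2 ab5 (wd lam) h)
        (hmono ab b ab1 ab2 b1 b2 ab6 _ h)
      have iac := fun h => And.intro (hmono ac a ac1 ac2 a1 a2 ac5 (wd lam) h)
        (hmono ac c ac1 ac2 c1 c2 ac6 _ h)
      have ibc := fun h => And.intro (hmono bc b bc1 bc2 b1 b2 bc5 (wd lam) h)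
        (hmono bc c bc1 bc2 c1 c2 bc6 _ h)
      have iabc := fun h => And.intro (hmono abc ab abc1 abc2 ab1 ab2 abc5 (wd lam) h)
        (And.intro (hmono abc ac abc1 abc2 ac1 ac2 abc6 _ h)
          (hmono abc bc abc1 abc2 bc1 bc2 abc7 _ h))
      have eab := hmeet a b ab ac bc ⟨a1, a2⟩ ⟨b1, b2⟩ ⟨ab1, ab2⟩ ⟨ac1, ac2⟩ ⟨bc1, bc2⟩ k2ab _ hn
      have eac := hmeet a c ac ab bc ⟨a1, a2⟩ ⟨c1, c2⟩ ⟨ac1, ac2⟩ ⟨ab1, ab2⟩ ⟨bc1, bc2⟩ k2ac _ hn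
      have ebc := hmeet b c bc ab ac ⟨b1, b2⟩ ⟨c1, c2⟩ ⟨bc1, bc2⟩ ⟨ab1, ab2⟩ ⟨ac1, ac2⟩ k2bc _ hn
      have eabc := hmeet ab bc abc abc abc ⟨ab1, ab2⟩ ⟨bc1, bc2⟩ ⟨abc1, abc2⟩ ⟨abc1, abc2⟩
        ⟨abc1, abc2⟩ k2abc _ hn
      have hcov := hcover (wd lam) hn
      exact incl_excl ea eb ec iab iac ibc iabc eab eac ebc
        (fun h1 h2 => (eabc h1 h2).elim id And.left) hcov _
    have htop0 : ∀ g : List ℕ × List ℕ, g.1.Sublist φ.1 → g.2.Sublist φ.2 →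
        g.1.length + g.2.length < φ.1.length + φ.2.length →
        ∑ p : Equiv.Perm (Fin N),
          (if PL (wd ⟨N, p⟩) (core g.1 g.2) then mu PPerm.one ⟨N, p⟩ else 0) = 0 := by
      intro g g1 g2 h2
      refine Finset.sum_eq_zero fun p _ => if_neg fun h => ?_
      have h3 := h.length
      obtain ⟨e1, e2⟩ := f3 _ _ g1 g2
      have hl := wd_length ρ
      rw [wd_length] at h3
      simp only at h3
      omega
    have htopw : ∑ p : Equiv.Perm (Fin N),
          (if PL (wd ⟨N, p⟩) (wd ρ) then mu PPerm.one ⟨N, p⟩ else 0) = mu PPerm.one ρ := by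
      obtain ⟨n, r⟩ := ρ
      simp only at hρ
      subst hρ
      rw [Finset.sum_eq_single r]
      · rw [if_pos (PL.of_OI (OI.refl _))]
      · intro p _ hp
        refine if_neg fun h => hp ?_
        exact eq_of_le_same p r ((le_iff_PL _ _).2 h)
      · intro h; exact absurd (Finset.mem_univ _) h
    rw [Finset.sum_range_succ, htopw] at hw
    rw [Finset.sum_range_succ, htop0 a a1 a2 a4] at sa
    rw [Finset.sum_range_succ, htop0 b b1 b2 b4] at sb
    rw [Finset.sum_range_succ, htop0 c c1 c2 c4] at sc
    rw [Finset.sum_range_succ, htop0 ab ab1 ab2 ab4] at sab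
    rw [Finset.sum_range_succ, htop0 ac ac1 ac2 ac4] at sac
    rw [Finset.sum_range_succ, htop0 bc bc1 bc2 bc4] at sbc
    rw [Finset.sum_range_succ, htop0 abc abc1 abc2 abc4] at sabc
    have hz : ∑ m ∈ Finset.range N, ∑ p : Equiv.Perm (Fin m),
          (if PL (wd ⟨m, p⟩) (wd ρ) then mu PPerm.one ⟨m, p⟩ else 0) = 0 := by
      rw [Finset.sum_congr rfl fun m hm => Finset.sum_congr rfl fun p _ =>
        hlow ⟨m, p⟩ (Finset.mem_range.1 hm)]
      simp only [Finset.sum_add_distrib, Finset.sum_sub_distrib]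
      linarith
    linarith
  exact fun ρ => key ρ.1 ρ rfl

theorem cnt_map {g : ℕ → ℕ} {d : ℕ} : ∀ l : List ℕ, (∀ a ∈ l, (g a < g d ↔ a < d)) →
    cnt (g d) (l.map g) = cnt d l
  | [], _ => rfl
  | a :: l, h => by
    have ih := cnt_map l fun b hb => h b (List.mem_cons_of_mem _ hb)
    have e : Nat.blt (g a) (g d) = Nat.blt a d := by
      rw [Bool.eq_iff_iff, Nat.blt_eq, Nat.blt_eq]
      exact h a List.mem_cons_self
    simp only [List.map_cons, cnt, e, ih]

theorem stdw_congr {x y : List ℕ} (h : OI x y) : stdw x = stdw y := by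
  obtain ⟨g, hg, rfl⟩ := h
  rw [stdw, stdw, List.map_map]
  refine List.map_congr_left fun d hd => ?_
  exact (cnt_map x fun a ha => hg.lt_iff ha hd).symm

theorem ivs_complete {x z : List ℕ} (h : Iv x z) : stdw z ∈ ivs x := by
  obtain ⟨p, y, q, rfl, ho, hs⟩ := h
  rw [ivs, mem_ddw, List.mem_flatMap]
  refine ⟨p.length, by simp only [List.mem_range, List.length_append]; omega, ?_⟩
  rw [List.mem_flatMap]
  refine ⟨y.length, by simp only [List.mem_range, List.length_append]; omega, ?_⟩
  have hb : sepb y (p ++ q) = true := by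
    refine List.all_eq_true.2 fun c hc => ?_
    simp only [Bool.or_eq_true, List.all_eq_true, Nat.blt_eq]
    exact hs c hc
  simp only [List.drop_left, List.take_left, hb, cond_true, List.mem_singleton]
  exact stdw_congr ho

/-- `x` splits as `t ++ e` with all entries of `t` below (`s` true) or above those of `e`. -/
def Spl (s : Bool) (x : List ℕ) : Prop :=
  ∃ t e : List ℕ, x = t ++ e ∧ t ≠ [] ∧ e ≠ [] ∧
    ∀ a ∈ t, ∀ b ∈ e, bif s then a < b else b < a

/-- Boolean version of `Spl`. -/
def splb (s : Bool) (x : List ℕ) : Bool :=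
  (List.range x.length).any fun k => Nat.blt 0 k &&
    (x.take k).all fun a => (x.drop k).all fun b => bif s then Nat.blt a b else Nat.blt b a

theorem splb_complete {s : Bool} {x : List ℕ} (h : Spl s x) : splb s x = true := by
  obtain ⟨t, e, rfl, ht, he, h⟩ := h
  have ht' := List.length_pos_iff.2 ht
  have he' := List.length_pos_iff.2 he
  refine List.any_eq_true.2 ⟨t.length, ?_, ?_⟩
  · simp only [List.mem_range, List.length_append]; omega
  · simp only [Bool.and_eq_true, Nat.blt_eq, List.take_left, List.drop_left, List.all_eq_true]
    refine ⟨ht', fun a ha b hb => ?_⟩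
    have := h a ha b hb
    cases s
    · simpa [Nat.blt_eq] using this
    · simpa [Nat.blt_eq] using this

theorem Spl.of_OI {s : Bool} {x y : List ℕ} (ho : OI x y) (h : Spl s x) : Spl s y := by
  obtain ⟨g, hg, rfl⟩ := ho
  obtain ⟨t, e, rfl, ht, he, h⟩ := h
  refine ⟨t.map g, e.map g, by simp, by simpa using ht, by simpa using he, ?_⟩
  intro a' ha' b' hb'
  obtain ⟨a, ha, rfl⟩ := List.mem_map.1 ha'
  obtain ⟨b, hb, rfl⟩ := List.mem_map.1 hb'
  have h1 := h a ha b hb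
  cases s
  · exact hg b (by simp [hb]) a (by simp [ha]) h1
  · exact hg a (by simp [ha]) b (by simp [hb]) h1

theorem two_aux {p t q1 q2 y1 y2 x x' : List ℕ} (hw : y1 ++ q1 = t ++ (y2 ++ q2))
    (ho : OI x y1) (ho' : OI x' y2) (hs : Sepd y1 (p ++ q1)) (hs' : Sepd y2 ((p ++ t) ++ q2))
    (n1 : ¬ Iv x x') (n2 : ¬ Iv x' x) (hspl : ∀ s, Spl s x → Spl s x' → False) :
    Two (p ++ (y1 ++ q1)) x x' := by
  have nest1 : ∀ t f : List ℕ, y1 = t ++ (y2 ++ f) → Sepd y2 (t ++ f) → False := by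
    intro t f e hsp
    exact n1 (Iv.of_OI ho.symm ⟨t, y2, f, e, ho', hsp⟩)
  rcases List.append_eq_append_iff.1 hw with ⟨t', rfl, rfl⟩ | ⟨e, rfl, hq⟩
  · refine ⟨p, y1, t', y2, q2, rfl, ho, ho', hs, hs'.mono (fun _ h => h) ?_⟩
    intro c hc
    simp only [List.mem_append] at hc ⊢
    tauto
  · rcases List.append_eq_append_iff.1 hq with ⟨f, he, rfl⟩ | ⟨f, rfl, rfl⟩
    · exfalso
      subst he
      refine nest1 t f rfl (fun c hc => ?_)
      by_cases hct : c ∈ t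
      · exact hs' c (by simp [hct])
      · exact hs' c (by simp only [List.mem_append] at hc ⊢; tauto)
    · by_cases he : e = []
      · subst he
        refine ⟨p, t, [], f, q2, by simp, by simpa using ho, by simpa using ho', ?_, ?_⟩
        · simpa using hs
        · refine (by simpa using hs' : Sepd f _).mono (fun _ h => h) ?_
          intro c hc
          simp only [List.mem_append] at hc ⊢
          simpa using hc
      exfalso
      by_cases ht : t = []
      · subst ht
        refine n2 (Iv.of_OI ho'.symm ⟨[], e, f, by simp, by simpa using ho, ?_⟩)
        exact (by simpa using hs : Sepd e _).mono (fun _ h => h) (fun c hc => by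
          simp only [List.mem_append] at hc ⊢; tauto)
      by_cases hf : f = []
      · subst hf
        refine nest1 t [] (by simp) (hs'.mono (fun _ h => h) (fun c hc => by
          simp only [List.mem_append] at hc ⊢; tauto))
      obtain ⟨e0, he0⟩ := List.exists_mem_of_ne_nil e he
      obtain ⟨f0, hf0⟩ := List.exists_mem_of_ne_nil f hf
      obtain ⟨t0, ht0⟩ := List.exists_mem_of_ne_nil t ht
      have hF : ∀ c ∈ f, (∀ d ∈ t ++ e, c < d) ∨ (∀ d ∈ t ++ e, d < c) :=
        fun c hc => hs c (by simp [hc])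
      have hT : ∀ c ∈ t, (∀ d ∈ e ++ f, c < d) ∨ (∀ d ∈ e ++ f, d < c) :=
        fun c hc => hs' c (by simp [hc])
      have m1 : ∀ d ∈ t, d ∈ t ++ e := fun d h => by simp [h]
      have m2 : ∀ d ∈ e, d ∈ t ++ e := fun d h => by simp [h]
      have m3 : ∀ d ∈ e, d ∈ e ++ f := fun d h => by simp [h]
      have m4 : ∀ d ∈ f, d ∈ e ++ f := fun d h => by simp [h]
      rcases hF f0 hf0 with hb | hb
      · -- everything decreases
        have h1 : ∀ c ∈ t, ∀ d ∈ e ++ f, d < c := by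
          intro c hc
          rcases hT c hc with h | h
          · have := h f0 (m4 _ hf0); have := hb c (m1 _ hc); omega
          · exact h
        have h2 : ∀ c ∈ f, ∀ d ∈ t ++ e, c < d := by
          intro c hc
          rcases hF c hc with h | h
          · exact h
          · have := h t0 (m1 _ ht0); have := h1 t0 ht0 c (m4 _ hc); omega
        refine hspl false (Spl.of_OI ho.symm ⟨t, e, rfl, ht, he, ?_⟩)
          (Spl.of_OI ho'.symm ⟨e, f, rfl, he, hf, ?_⟩)
        · intro a ha b hb; exact h1 a ha b (m3 _ hb)
        · intro a ha b hb; exact h2 b hb a (m2 _ ha)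
      · have h1 : ∀ c ∈ t, ∀ d ∈ e ++ f, c < d := by
          intro c hc
          rcases hT c hc with h | h
          · exact h
          · have := h f0 (m4 _ hf0); have := hb c (m1 _ hc); omega
        have h2 : ∀ c ∈ f, ∀ d ∈ t ++ e, d < c := by
          intro c hc
          rcases hF c hc with h | h
          · have := h t0 (m1 _ ht0); have := h1 t0 ht0 c (m4 _ hc); omega
          · exact h
        refine hspl true (Spl.of_OI ho.symm ⟨t, e, rfl, ht, he, ?_⟩)
          (Spl.of_OI ho'.symm ⟨e, f, rfl, he, hf, ?_⟩)
        · intro a ha b hb; exact h1 a ha b (m3 _ hb)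
        · intro a ha b hb; exact h2 b hb a (m2 _ ha)

/-- Interval copies of the two words are always disjoint. -/
def djb (x x' : List ℕ) : Bool :=
  !memb (stdw x') (ivs x) && !memb (stdw x) (ivs x') &&
    !(splb true x && splb true x') && !(splb false x && splb false x')

theorem frame_of_djb {w x x' : List ℕ} (hd : djb x x' = true) (h1 : Iv w x) (h2 : Iv w x') :
    Frame w x x' := by
  simp only [djb, Bool.and_eq_true, Bool.not_eq_true'] at hd
  obtain ⟨⟨⟨d1, d2⟩, d3⟩, d4⟩ := hd
  have n1 : ¬ Iv x x' := fun h => by rw [memb_iff.2 (ivs_complete h)] at d1; cases d1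
  have n2 : ¬ Iv x' x := fun h => by rw [memb_iff.2 (ivs_complete h)] at d2; cases d2
  have hspl : ∀ s, Spl s x → Spl s x' → False := by
    intro s e1 e2
    cases s
    · rw [splb_complete e1, splb_complete e2] at d4; cases d4
    · rw [splb_complete e1, splb_complete e2] at d3; cases d3
  obtain ⟨p, y, q, rfl, ho, hs⟩ := h1
  obtain ⟨p', y', q', hw, ho', hs'⟩ := h2
  rcases List.append_eq_append_iff.1 hw with ⟨t, rfl, hq⟩ | ⟨t, rfl, hq⟩
  · exact (two_aux hq ho ho' hs hs' n1 n2 hspl).frame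
  · have := (two_aux hq ho' ho hs' hs n2 n1 (fun s e1 e2 => hspl s e2 e1)).frame.swap
    rw [hw]
    exact this

/-- Proof of a single-interval fact. -/
theorem single {facts : List (List ℕ × List ℕ)} (φ a b g : List ℕ)
    (hfacts : ∀ F ∈ facts, ZeroF F)
    (hchk : chk facts (φ, []) (a, []) (b, []) (a, []) (g, []) (a, []) (g, []) (g, []) = true) :
    ZeroF (φ, []) :=
  engine facts _ _ _ _ _ _ _ _ hfacts (fun _ _ h _ => h.frame) hchk

/-- Proof of a fact on two intervals. -/
theorem double {facts : List (List ℕ × List ℕ)} (φ a b c ab ac bc abc : List ℕ × List ℕ)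
    (hfacts : ∀ F ∈ facts, ZeroF F) (hd : djb φ.1 φ.2 = true)
    (hchk : chk facts φ a b c ab ac bc abc = true) : ZeroF φ :=
  engine facts _ _ _ _ _ _ _ _ hfacts (fun _ _ h1 h2 => frame_of_djb hd h1 h2) hchk

theorem cons_facts {F : List ℕ × List ℕ} {facts : List (List ℕ × List ℕ)} (h : ZeroF F)
    (hf : ∀ F ∈ facts, ZeroF F) : ∀ G ∈ F :: facts, ZeroF G := by
  intro G hG
  rcases List.mem_cons.1 hG with rfl | hG
  · exact h
  · exact hf G hG

theorem no_facts : ∀ F ∈ ([] : List (List ℕ × List ℕ)), ZeroF F := by simp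

theorem fact_12_21 : ZeroF ([0, 1], [1, 0]) :=
  double _ ([0], [1, 0]) ([0, 1], [1]) ([0], [1, 0]) ([0], [1]) ([0], [1, 0]) ([0], [1]) ([0], [1])
    no_facts (by decide +kernel) (by decide +kernel)

theorem fact_123 : ZeroF ([0, 1, 2], []) :=
  single [0, 1, 2] [0, 1] [0, 1] [0, 1]
    (cons_facts fact_12_21 no_facts) (by decide +kernel)

theorem fact_321 : ZeroF ([2, 1, 0], []) :=
  single [2, 1, 0] [2, 1] [2, 1] [2, 1]
    (cons_facts fact_123 (cons_facts fact_12_21 no_facts)) (by decide +kernel)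

theorem fact_21354 : ZeroF ([1, 0, 2, 4, 3], []) :=
  single [1, 0, 2, 4, 3] [1, 0, 4, 3] [1, 0, 4, 3] [1, 0, 4, 3]
    (cons_facts fact_321 (cons_facts fact_123 (cons_facts fact_12_21 no_facts))) (by decide +kernel)

theorem fact_23145 : ZeroF ([1, 2, 0, 3, 4], []) :=
  single [1, 2, 0, 3, 4] [1, 2, 0, 3] [1, 2, 0, 3] [1, 2, 0, 3]
    (cons_facts fact_21354 (cons_facts fact_321 (cons_facts fact_123 (cons_facts fact_12_21 no_facts)))) (by decide +kernel)

theorem fact_12534 : ZeroF ([0, 1, 4, 2, 3], []) :=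
  single [0, 1, 4, 2, 3] [0, 4, 2, 3] [0, 4, 2, 3] [0, 4, 2, 3]
    (cons_facts fact_23145 (cons_facts fact_21354 (cons_facts fact_321 (cons_facts fact_123 (cons_facts fact_12_21 no_facts))))) (by decide +kernel)

theorem fact_2431_213 : ZeroF ([1, 3, 2, 0], [1, 0, 2]) :=
  double _ ([1, 3, 2, 0], [1, 0]) ([1, 3, 2], [1, 0, 2]) ([1, 3, 0], [1, 2]) ([1, 3, 2], [1, 0]) ([1, 3, 0], [1]) ([1, 3], [1, 2]) ([1, 3], [1])
    (cons_facts fact_12534 (cons_facts fact_23145 (cons_facts fact_21354 (cons_facts fact_321 (cons_facts fact_123 (cons_facts fact_12_21 no_facts)))))) (by decide +kernel) (by decide +kernel)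

theorem fact_3241_132 : ZeroF ([2, 1, 3, 0], [0, 2, 1]) :=
  double _ ([2, 1, 3, 0], [2, 1]) ([2, 1, 3], [0, 2, 1]) ([2, 3, 0], [0, 2]) ([2, 1, 3], [2, 1]) ([2, 3, 0], [0]) ([2, 3], [0, 2]) ([2, 3], [0])
    (cons_facts fact_2431_213 (cons_facts fact_12534 (cons_facts fact_23145 (cons_facts fact_21354 (cons_facts fact_321 (cons_facts fact_123 (cons_facts fact_12_21 no_facts))))))) (by decide +kernel) (by decide +kernel)

theorem fact_2314_312 : ZeroF ([1, 2, 0, 3], [2, 0, 1]) :=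
  double _ ([1, 2, 0, 3], [0, 1]) ([1, 2, 0], [2, 0, 1]) ([1, 0, 3], [2, 0]) ([1, 2, 0], [0, 1]) ([1, 0, 3], [2]) ([1, 0], [2, 0]) ([1, 0], [2])
    (cons_facts fact_3241_132 (cons_facts fact_2431_213 (cons_facts fact_12534 (cons_facts fact_23145 (cons_facts fact_21354 (cons_facts fact_321 (cons_facts fact_123 (cons_facts fact_12_21 no_facts)))))))) (by decide +kernel) (by decide +kernel)

theorem fact_1423_231 : ZeroF ([0, 3, 1, 2], [1, 2, 0]) :=
  double _ ([0, 3, 1, 2], [1, 2]) ([3, 1, 2], [1, 2, 0]) ([0, 3, 1], [1, 0]) ([3, 1, 2], [1, 2]) ([0, 3, 1], [1]) ([3, 1], [1, 0]) ([3, 1], [1])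
    (cons_facts fact_2314_312 (cons_facts fact_3241_132 (cons_facts fact_2431_213 (cons_facts fact_12534 (cons_facts fact_23145 (cons_facts fact_21354 (cons_facts fact_321 (cons_facts fact_123 (cons_facts fact_12_21 no_facts))))))))) (by decide +kernel) (by decide +kernel)

theorem fact_2431_2143 : ZeroF ([1, 3, 2, 0], [1, 0, 3, 2]) :=
  double _ ([1, 3, 2, 0], [1, 3, 2]) ([1, 3, 2], [1, 0, 3, 2]) ([1, 3, 2, 0], [1, 3, 2]) ([1, 3, 2], [1, 3, 2]) ([1, 3, 2, 0], [1, 3, 2]) ([1, 3, 2], [1, 3, 2]) ([1, 3, 2], [1, 3, 2])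
    (cons_facts fact_1423_231 (cons_facts fact_2314_312 (cons_facts fact_3241_132 (cons_facts fact_2431_213 (cons_facts fact_12534 (cons_facts fact_23145 (cons_facts fact_21354 (cons_facts fact_321 (cons_facts fact_123 (cons_facts fact_12_21 no_facts)))))))))) (by decide +kernel) (by decide +kernel)

theorem fact_3241_2143 : ZeroF ([2, 1, 3, 0], [1, 0, 3, 2]) :=
  double _ ([2, 1, 3, 0], [1, 0, 3]) ([2, 1, 3], [1, 0, 3, 2]) ([2, 1, 3, 0], [1, 0, 3]) ([2, 1, 3], [1, 0, 3]) ([2, 1, 3, 0], [1, 0, 3]) ([2, 1, 3], [1, 0, 3]) ([2, 1, 3], [1, 0, 3])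
    (cons_facts fact_2431_2143 (cons_facts fact_1423_231 (cons_facts fact_2314_312 (cons_facts fact_3241_132 (cons_facts fact_2431_213 (cons_facts fact_12534 (cons_facts fact_23145 (cons_facts fact_21354 (cons_facts fact_321 (cons_facts fact_123 (cons_facts fact_12_21 no_facts))))))))))) (by decide +kernel) (by decide +kernel)

theorem fact_25134_231 : ZeroF ([1, 4, 0, 2, 3], [1, 2, 0]) :=
  double _ ([1, 4, 0, 2], [1, 2, 0]) ([1, 4, 0, 2, 3], [1, 2]) ([1, 4, 0, 2], [1, 2, 0]) ([1, 4, 0, 2], [1, 2]) ([1, 4, 0, 2], [1, 2, 0]) ([1, 4, 0, 2], [1, 2]) ([1, 4, 0, 2], [1, 2])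
    (cons_facts fact_3241_2143 (cons_facts fact_2431_2143 (cons_facts fact_1423_231 (cons_facts fact_2314_312 (cons_facts fact_3241_132 (cons_facts fact_2431_213 (cons_facts fact_12534 (cons_facts fact_23145 (cons_facts fact_21354 (cons_facts fact_321 (cons_facts fact_123 (cons_facts fact_12_21 no_facts)))))))))))) (by decide +kernel) (by decide +kernel)

theorem fact_23514_312 : ZeroF ([1, 2, 4, 0, 3], [2, 0, 1]) :=
  double _ ([1, 4, 0, 3], [2, 0, 1]) ([1, 2, 4, 0, 3], [0, 1]) ([1, 4, 0, 3], [2, 0, 1]) ([1, 4, 0, 3], [0, 1]) ([1, 4, 0, 3], [2, 0, 1]) ([1, 4, 0, 3], [0, 1]) ([1, 4, 0, 3], [0, 1])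
    (cons_facts fact_25134_231 (cons_facts fact_3241_2143 (cons_facts fact_2431_2143 (cons_facts fact_1423_231 (cons_facts fact_2314_312 (cons_facts fact_3241_132 (cons_facts fact_2431_213 (cons_facts fact_12534 (cons_facts fact_23145 (cons_facts fact_21354 (cons_facts fact_321 (cons_facts fact_123 (cons_facts fact_12_21 no_facts))))))))))))) (by decide +kernel) (by decide +kernel)

theorem fact_25134_23514 : ZeroF ([1, 4, 0, 2, 3], [1, 2, 4, 0, 3]) :=
  double _ ([1, 4, 0, 2, 3], [1, 4, 0, 3]) ([1, 4, 0, 2], [1, 2, 4, 0, 3]) ([1, 4, 0, 2, 3], [1, 4, 0, 3]) ([1, 4, 0, 2], [1, 4, 0, 3]) ([1, 4, 0, 2, 3], [1, 4, 0, 3]) ([1, 4, 0, 2], [1, 4, 0, 3]) ([1, 4, 0, 2], [1, 4, 0, 3])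
    (cons_facts fact_23514_312 (cons_facts fact_25134_231 (cons_facts fact_3241_2143 (cons_facts fact_2431_2143 (cons_facts fact_1423_231 (cons_facts fact_2314_312 (cons_facts fact_3241_132 (cons_facts fact_2431_213 (cons_facts fact_12534 (cons_facts fact_23145 (cons_facts fact_21354 (cons_facts fact_321 (cons_facts fact_123 (cons_facts fact_12_21 no_facts)))))))))))))) (by decide +kernel) (by decide +kernel)

theorem fact_215463 : ZeroF ([1, 0, 4, 3, 5, 2], []) :=
  single [1, 0, 4, 3, 5, 2] [1, 4, 3, 5, 2] [1, 0, 4, 3, 5] [1, 4, 3, 5]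
    (cons_facts fact_25134_23514 (cons_facts fact_23514_312 (cons_facts fact_25134_231 (cons_facts fact_3241_2143 (cons_facts fact_2431_2143 (cons_facts fact_1423_231 (cons_facts fact_2314_312 (cons_facts fact_3241_132 (cons_facts fact_2431_213 (cons_facts fact_12534 (cons_facts fact_23145 (cons_facts fact_21354 (cons_facts fact_321 (cons_facts fact_123 (cons_facts fact_12_21 no_facts))))))))))))))) (by decide +kernel)

theorem fact_236145 : ZeroF ([1, 2, 5, 0, 3, 4], []) :=
  single [1, 2, 5, 0, 3, 4] [1, 5, 0, 3, 4] [1, 2, 5, 0, 3] [1, 5, 0, 3]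
    (cons_facts fact_25134_23514 (cons_facts fact_23514_312 (cons_facts fact_25134_231 (cons_facts fact_3241_2143 (cons_facts fact_2431_2143 (cons_facts fact_1423_231 (cons_facts fact_2314_312 (cons_facts fact_3241_132 (cons_facts fact_2431_213 (cons_facts fact_12534 (cons_facts fact_23145 (cons_facts fact_21354 (cons_facts fact_321 (cons_facts fact_123 (cons_facts fact_12_21 no_facts))))))))))))))) (by decide +kernel)

theorem fact_214653 : ZeroF ([1, 0, 3, 5, 4, 2], []) :=
  single [1, 0, 3, 5, 4, 2] [1, 3, 5, 4, 2] [1, 0, 3, 2] [1, 3, 2]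
    (cons_facts fact_25134_23514 (cons_facts fact_23514_312 (cons_facts fact_25134_231 (cons_facts fact_3241_2143 (cons_facts fact_2431_2143 (cons_facts fact_1423_231 (cons_facts fact_2314_312 (cons_facts fact_3241_132 (cons_facts fact_2431_213 (cons_facts fact_12534 (cons_facts fact_23145 (cons_facts fact_21354 (cons_facts fact_321 (cons_facts fact_123 (cons_facts fact_12_21 no_facts))))))))))))))) (by decide +kernel)

theorem Iv_of_hasIntervalCopy {π α : PPerm} (h : HasIntervalCopy π α) : Iv (wd π) (wd α) := by
  obtain ⟨f, i, v, h1, h2, h3⟩ := h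
  obtain ⟨n, r⟩ := π
  obtain ⟨k, s⟩ := α
  simp only at f h1 h2 h3
  have finj : Function.Injective f := by
    intro a b hab
    have ha := h1 a
    have hb := h1 b
    rw [hab] at ha
    exact Fin.ext (by omega)
  have hsurj : ∀ c : ℕ, v ≤ c → c < v + k → ∃ a, (r (f a) : ℕ) = c := by
    intro c hc1 hc2
    have himg : (Finset.univ.image fun a : Fin k => (r (f a) : ℕ)) = Finset.Ico v (v + k) := by
      refine Finset.eq_of_subset_of_card_le ?_ ?_
      · intro c hc
        obtain ⟨a, -, rfl⟩ := Finset.mem_image.1 hc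
        exact Finset.mem_Ico.2 (h2 a)
      · rw [Finset.card_image_of_injective _ fun a b hab => finj (r.injective (Fin.ext hab))]
        simp
    have : c ∈ Finset.univ.image fun a : Fin k => (r (f a) : ℕ) := by
      rw [himg]; exact Finset.mem_Ico.2 ⟨hc1, hc2⟩
    obtain ⟨a, -, ha⟩ := Finset.mem_image.1 this
    exact ⟨a, ha⟩
  have hik : k = 0 ∨ i + k ≤ n := by
    rcases Nat.eq_zero_or_pos k with h0 | h0
    · exact Or.inl h0
    · right
      have e1 := h1 ⟨k - 1, by omega⟩
      have e2 := (f ⟨k - 1, by omega⟩).2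
      simp only at e1
      omega
  rcases hik with hk0 | hik
  · subst hk0
    have : wd ⟨0, s⟩ = [] := by simp [wd]
    rw [this]
    exact Iv.empty _
  set w := wd ⟨n, r⟩ with hw
  have hlen : w.length = n := wd_length _
  have hget : ∀ (j : ℕ) (hj : j < w.length), w[j] = (r ⟨j, by omega⟩ : ℕ) := by
    intro j hj
    simp [hw, wd]
  have hy : (w.drop i).take k = List.ofFn fun a : Fin k => (r (f a) : ℕ) := by
    refine List.ext_getElem ?_ ?_
    · simp [hlen]; omega
    · intro j hj1 hj2
      rw [List.getElem_take, List.getElem_drop, hget, List.getElem_ofFn]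
      congr 2
      refine Fin.ext ?_
      rw [h1]
  refine ⟨w.take i, (w.drop i).take k, (w.drop i).drop k, by simp, ?_, ?_⟩
  · rw [hy]
    refine ⟨fun c => if hc : c < k then (r (f (s.symm ⟨c, hc⟩)) : ℕ) else 0, ?_, ?_⟩
    · intro a ha b hb hab
      rw [wd, List.mem_ofFn] at ha hb
      obtain ⟨a', rfl⟩ := ha
      obtain ⟨b', rfl⟩ := hb
      simp only [Fin.is_lt, dif_pos, Fin.eta, Equiv.symm_apply_apply]
      exact (h3 a' b').1 hab
    · rw [wd, List.map_ofFn]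
      congr 1
      funext a
      simp
  · intro c hc
    have hcj : ∃ (j : ℕ) (hj : j < w.length), w[j] = c ∧ (j < i ∨ i + k ≤ j) := by
      rcases List.mem_append.1 hc with hc | hc
      · obtain ⟨j, hj, rfl⟩ := List.getElem_of_mem hc
        have hj' := hj
        rw [List.length_take] at hj'
        exact ⟨j, by omega, by rw [List.getElem_take], by omega⟩
      · rw [List.drop_drop] at hc
        obtain ⟨j, hj, rfl⟩ := List.getElem_of_mem hc
        have hj' := hj
        rw [List.length_drop] at hj'
        exact ⟨i + k + j, by omega, by rw [List.getElem_drop], by omega⟩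
    obtain ⟨j, hj, rfl, hji⟩ := hcj
    have hnot : ¬ (v ≤ w[j] ∧ w[j] < v + k) := by
      rintro ⟨e1, e2⟩
      obtain ⟨a, ha⟩ := hsurj _ e1 e2
      rw [hget j hj] at ha
      have := r.injective (Fin.ext ha)
      have h4 := congrArg Fin.val this
      rw [h1] at h4
      simp only at h4
      have := a.2
      omega
    have hmem : ∀ d ∈ (w.drop i).take k, v ≤ d ∧ d < v + k := by
      intro d hd
      rw [hy, List.mem_ofFn] at hd
      obtain ⟨a, rfl⟩ := hd
      exact h2 a
    rcases lt_or_ge w[j] v with h5 | h5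
    · left
      intro d hd
      have := hmem d hd
      omega
    · right
      intro d hd
      have := hmem d hd
      have : ¬ w[j] < v + k := fun h => hnot ⟨h5, h⟩
      omega

theorem wd_p215463 : wd p215463 = [1, 0, 4, 3, 5, 2] := rfl

theorem wd_p236145 : wd p236145 = [1, 2, 5, 0, 3, 4] := rfl

theorem wd_p214653 : wd p214653 = [1, 0, 3, 5, 4, 2] := rfl

/-- **(Theorem `thm-annihil`.)**  Each of `215463`, `236145` and `214653` is
an annihilator: every permutation `π` containing an interval copy of one of
them satisfies `μ(1,π) = 0`. -/
theorem annihilators_215463_236145_214653 (π : PPerm)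
    (h : HasIntervalCopy π p215463 ∨ HasIntervalCopy π p236145 ∨
      HasIntervalCopy π p214653) :
    mu PPerm.one π = 0 := by
  rcases h with h | h | h
  · have h1 := Iv_of_hasIntervalCopy h
    rw [wd_p215463] at h1
    exact fact_215463 π h1 (Iv.empty _)
  · have h1 := Iv_of_hasIntervalCopy h
    rw [wd_p236145] at h1
    exact fact_236145 π h1 (Iv.empty _)
  · have h1 := Iv_of_hasIntervalCopy h
    rw [wd_p214653] at h1
    exact fact_214653 π h1 (Iv.empty _)
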